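/- arXiv:1707.06754 — 3 statements merged into one kernel-verified Lean document; each statement's English description precedes it below -/
import Mathlib

section
/- Let n ≥ 1, let Ω ⊆ ℝ^n be a nonempty open set, and let V : Ω → ℝ be a C² function such that ΔV(x) < 0 for all x ∈ Ω, where Δ is the Euclidean Laplacian. Then for every 1 < p < ∞ and every smooth compactly supported complex-valued function u on Ω, one has ∫_Ω |ΔV| |u|^p dx ≤ p^p ∫_Ω (|∇V|^p / |ΔV|^{p-1}) |∇u|^p dx. -/
/-!
Write `w = |u|^p`, a `C¹` function with compact support in `Ω` because `p > 1`. The vector field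
`w ∇V` is then `C¹` with compact support, so its divergence `w ΔV + ∇w · ∇V` has integral zero
(`integral_divergence_eq_zero`). By Cauchy–Schwarz and `|∂ᵢ w| ≤ p |u|^(p-1) |∂ᵢ u|`,

  `|ΔV| |u|^p = ∇w · ∇V - div (w ∇V) ≤ p |u|^(p-1) |∇V| |∇u| - div (w ∇V)`  on `Ω`.

Hölder's inequality can be replaced by the pointwise Young inequality with exponents `p/(p-1)`
and `p` (`young_pointwise`), which bounds the first term on the right by
`(1 - 1/p) |ΔV| |u|^p + (1/p) p^p |∇V|^p |ΔV|^(1-p) |∇u|^p`. Absorbing and integrating yields the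
claim with the constant `p^p`, without any optimisation of a parameter.
-/

open MeasureTheory Real

/-- The Euclidean Laplacian of a function on `ℝ^n`. -/
noncomputable def lap {n : ℕ} {E : Type*} [NormedAddCommGroup E] [NormedSpace ℝ E]
    (f : EuclideanSpace ℝ (Fin n) → E) (x : EuclideanSpace ℝ (Fin n)) : E :=
  ∑ i : Fin n,
    fderiv ℝ (fun y => fderiv ℝ f y (EuclideanSpace.single i 1)) x (EuclideanSpace.single i 1)

/-- The Euclidean norm of the gradient of a function on `ℝ^n`. -/
noncomputable def gradNorm {n : ℕ} {E : Type*} [NormedAddCommGroup E] [NormedSpace ℝ E]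
    (f : EuclideanSpace ℝ (Fin n) → E) (x : EuclideanSpace ℝ (Fin n)) : ℝ :=
  Real.sqrt (∑ i : Fin n, ‖fderiv ℝ f x (EuclideanSpace.single i 1)‖ ^ 2)

/-- Young's inequality for `L^((p-1)/p) t^(p-1)` and `p g h L^(-(p-1)/p)`. -/
lemma young_pointwise {p L t g h : ℝ} (hp : 1 < p) (hL : 0 < L) (ht : 0 ≤ t) (hg : 0 ≤ g)
    (hh : 0 ≤ h) :
    p * t ^ (p - 1) * (g * h) ≤
      (1 - 1 / p) * (L * t ^ p) + 1 / p * (p ^ p * (g ^ p / L ^ (p - 1) * h ^ p)) := by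
  have hp0 : 0 < p := by linarith
  have hp1 : 0 < p - 1 := by linarith
  have hc : (p / (p - 1)).HolderConjugate p := (Real.HolderConjugate.conjExponent hp).symm
  have hM : 0 < L ^ ((p - 1) / p) := Real.rpow_pos_of_pos hL _
  have key := Real.young_inequality_of_nonneg
    (a := L ^ ((p - 1) / p) * t ^ (p - 1)) (b := p * (g * h) / L ^ ((p - 1) / p))
    (by positivity) (by positivity) hc
  have e1 : (L ^ ((p - 1) / p) * t ^ (p - 1)) ^ (p / (p - 1)) = L * t ^ p := by
    rw [Real.mul_rpow hM.le (by positivity), ← Real.rpow_mul hL.le, ← Real.rpow_mul ht]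
    have a1 : (p - 1) / p * (p / (p - 1)) = 1 := by field_simp
    have a2 : (p - 1) * (p / (p - 1)) = p := by field_simp
    rw [a1, a2, Real.rpow_one]
  have e2 : (p * (g * h) / L ^ ((p - 1) / p)) ^ p = p ^ p * (g ^ p / L ^ (p - 1) * h ^ p) := by
    rw [Real.div_rpow (by positivity) hM.le, ← Real.rpow_mul hL.le,
      Real.mul_rpow hp0.le (by positivity), Real.mul_rpow hg hh]
    have a1 : (p - 1) / p * p = p - 1 := by field_simp
    rw [a1]
    ring
  rw [e1, e2] at key
  calc p * t ^ (p - 1) * (g * h)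
      = L ^ ((p - 1) / p) * t ^ (p - 1) * (p * (g * h) / L ^ ((p - 1) / p)) := by
        field_simp
    _ ≤ _ := key
    _ = _ := by field_simp

lemma abs_fderiv_norm_rpow_apply_le {E : Type*} [NormedAddCommGroup E] [NormedSpace ℝ E]
    {u : E → ℂ} (hu : Differentiable ℝ u) {p : ℝ} (hp : 1 < p) (x v : E) :
    |fderiv ℝ (fun y => ‖u y‖ ^ p) x v| ≤ p * ‖u x‖ ^ (p - 1) * ‖fderiv ℝ u x v‖ := by
  rw [hu.fderiv_norm_rpow hp]
  simp only [_root_.smul_apply, ContinuousLinearMap.comp_apply, innerSL_apply_apply,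
    smul_eq_mul]
  have hp0 : 0 < p := by linarith
  rw [abs_mul, abs_of_nonneg (by positivity : 0 ≤ p * ‖u x‖ ^ (p - 2))]
  calc p * ‖u x‖ ^ (p - 2) * |inner ℝ (u x) (fderiv ℝ u x v)|
      ≤ p * ‖u x‖ ^ (p - 2) * (‖u x‖ * ‖fderiv ℝ u x v‖) := by
        gcongr
        exact abs_real_inner_le_norm _ _
    _ = p * (‖u x‖ ^ (p - 2) * ‖u x‖) * ‖fderiv ℝ u x v‖ := by ring
    _ = _ := by
        rw [← Real.rpow_add_one' (by positivity) (by linarith)]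
        ring_nf

lemma integrableOn_of_continuousOn_of_zero {E : Type*} [TopologicalSpace E] [T2Space E]
    [MeasurableSpace E] [OpensMeasurableSpace E] {μ : Measure E} [IsFiniteMeasureOnCompacts μ]
    {Ω K : Set E} {f : E → ℝ} (hΩ : IsOpen Ω) (hK : IsCompact K) (hKΩ : K ⊆ Ω)
    (hf : ContinuousOn f Ω) (h0 : ∀ x, x ∉ K → f x = 0) : IntegrableOn f Ω μ := by
  have h1 : IntegrableOn f K μ := (hf.mono hKΩ).integrableOn_compact hK
  exact h1.of_forall_sdiff_eq_zero hΩ.measurableSet fun x hx => h0 x hx.2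

lemma integral_fderiv_apply_eq_zero {n : ℕ} {F : EuclideanSpace ℝ (Fin n) → ℝ}
    (hF : ContDiff ℝ 1 F) (hc : HasCompactSupport F) (v : EuclideanSpace ℝ (Fin n)) :
    Integrable (fun x => fderiv ℝ F x v) ∧ ∫ x, fderiv ℝ F x v = 0 := by
  have hi : Integrable (fun x => fderiv ℝ F x v) := by
    refine Continuous.integrable_of_hasCompactSupport ?_ (hc.fderiv_apply ℝ v)
    exact (hF.continuous_fderiv one_ne_zero).clm_apply continuous_const
  refine ⟨hi, ?_⟩
  -- integration by parts against the constant function `1`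
  have := integral_mul_fderiv_eq_neg_fderiv_mul_of_integrable (μ := volume)
    (f := fun _ : EuclideanSpace ℝ (Fin n) => (1 : ℝ)) (g := F) (v := v)
    (by simp) (by simpa using hi)
    (by simpa using hF.continuous.integrable_of_hasCompactSupport hc)
    (fun x _ => differentiableAt_const _)
    (fun x _ => hF.differentiable one_ne_zero x)
  simpa using this

/-- A product `w f` is `C¹` everywhere when `f` is merely `C¹` near the support of `w`. -/
lemma contDiff_mul_of_tsupport_subset {E : Type*} [NormedAddCommGroup E] [NormedSpace ℝ E]
    {Ω : Set E} (hΩ : IsOpen Ω) {w f : E → ℝ} (hw : ContDiff ℝ 1 w) (hf : ContDiffOn ℝ 1 f Ω)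
    (hs : tsupport w ⊆ Ω) : ContDiff ℝ 1 (fun x => w x * f x) := by
  rw [contDiff_iff_contDiffAt]
  intro x
  by_cases hx : x ∈ Ω
  · exact hw.contDiffAt.mul (hf.contDiffAt (hΩ.mem_nhds hx))
  · have h0 : (fun x => w x * f x) =ᶠ[nhds x] fun _ => (0 : ℝ) := by
      filter_upwards [notMem_tsupport_iff_eventuallyEq.1 fun h => hx (hs h)] with y hy
      simp [hy]
    exact contDiffAt_const.congr_of_eventuallyEq h0

/-- The divergence theorem for `w ∇V`, where `w` is compactly supported in `Ω`. -/
lemma integral_divergence_eq_zero {n : ℕ} {Ω : Set (EuclideanSpace ℝ (Fin n))} (hΩ : IsOpen Ω)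
    {V w : EuclideanSpace ℝ (Fin n) → ℝ} (hV : ContDiffOn ℝ 2 V Ω) (hw : ContDiff ℝ 1 w)
    (hc : HasCompactSupport w) (hs : tsupport w ⊆ Ω) :
    let D := fun x => w x * lap V x + ∑ i : Fin n,
      fderiv ℝ w x (EuclideanSpace.single i 1) * fderiv ℝ V x (EuclideanSpace.single i 1)
    IntegrableOn D Ω ∧ ∫ x in Ω, D x = 0 := by
  intro D
  set e : Fin n → EuclideanSpace ℝ (Fin n) := fun i => EuclideanSpace.single i 1 with he
  have hf : ∀ i, ContDiffOn ℝ 1 (fun x => fderiv ℝ V x (e i)) Ω := fun i =>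
    (hV.fderiv_of_isOpen hΩ (by norm_num)).clm_apply contDiffOn_const
  have hF : ∀ i, ContDiff ℝ 1 (fun x => w x * fderiv ℝ V x (e i)) := fun i =>
    contDiff_mul_of_tsupport_subset hΩ hw (hf i) hs
  have hFc : ∀ i, HasCompactSupport (fun x => w x * fderiv ℝ V x (e i)) := fun i =>
    hc.mul_right
  have hFi := fun i => integral_fderiv_apply_eq_zero (hF i) (hFc i) (e i)
  have hD : Set.EqOn
      (fun x => ∑ i, fderiv ℝ (fun x => w x * fderiv ℝ V x (e i)) x (e i)) D Ω := by
    intro x hx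
    simp only [D, lap, Finset.mul_sum, ← Finset.sum_add_distrib]
    refine Finset.sum_congr rfl fun i _ => ?_
    rw [fderiv_fun_mul (hw.differentiable one_ne_zero x)
      (((hf i).contDiffAt (hΩ.mem_nhds hx)).differentiableAt one_ne_zero)]
    simp [he, mul_comm]
  have hsum0 : ∀ x, x ∉ Ω →
      ∑ i, fderiv ℝ (fun x => w x * fderiv ℝ V x (e i)) x (e i) = 0 := by
    intro x hx
    refine Finset.sum_eq_zero fun i _ => ?_
    have h0 : (fun x => w x * fderiv ℝ V x (e i)) =ᶠ[nhds x] fun _ => (0 : ℝ) := by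
      filter_upwards [notMem_tsupport_iff_eventuallyEq.1 fun h => hx (hs h)] with y hy
      simp [hy]
    rw [h0.fderiv_eq]
    simp
  constructor
  · exact (integrable_finsetSum _ fun i _ => (hFi i).1).integrableOn.congr_fun hD
      hΩ.measurableSet
  · rw [← setIntegral_congr_fun hΩ.measurableSet hD,
      setIntegral_eq_integral_of_forall_compl_eq_zero hsum0,
      integral_finsetSum _ fun i _ => (hFi i).1]
    exact Finset.sum_eq_zero fun i _ => (hFi i).2

lemma continuousOn_gradNorm {n : ℕ} {E : Type*} [NormedAddCommGroup E] [NormedSpace ℝ E]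
    {Ω : Set (EuclideanSpace ℝ (Fin n))} {f : EuclideanSpace ℝ (Fin n) → E}
    (hf : ContinuousOn (fderiv ℝ f) Ω) : ContinuousOn (gradNorm f) Ω := by
  unfold gradNorm
  refine Real.continuous_sqrt.comp_continuousOn (continuousOn_finsetSum _ fun i _ => ?_)
  exact ((hf.clm_apply continuousOn_const).norm).pow 2

lemma continuousOn_lap {n : ℕ} {Ω : Set (EuclideanSpace ℝ (Fin n))} (hΩ : IsOpen Ω)
    {V : EuclideanSpace ℝ (Fin n) → ℝ} (hV : ContDiffOn ℝ 2 V Ω) : ContinuousOn (lap V) Ω := by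
  unfold lap
  refine continuousOn_finsetSum _ fun i _ => ?_
  have h1 : ContDiffOn ℝ 1 (fun x => fderiv ℝ V x (EuclideanSpace.single i 1)) Ω :=
    (hV.fderiv_of_isOpen hΩ (by norm_num)).clm_apply contDiffOn_const
  exact (h1.continuousOn_fderiv_of_isOpen hΩ le_rfl).clm_apply continuousOn_const

theorem weighted_Lp_hardy (n : ℕ) (hn : 1 ≤ n) (Ω : Set (EuclideanSpace ℝ (Fin n)))
    (hΩ : IsOpen Ω) (hne : Ω.Nonempty)
    (V : EuclideanSpace ℝ (Fin n) → ℝ) (hV : ContDiffOn ℝ 2 V Ω)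
    (hΔV : ∀ x ∈ Ω, lap V x < 0) (p : ℝ) (hp : 1 < p)
    (u : EuclideanSpace ℝ (Fin n) → ℂ) (hu : ContDiff ℝ (⊤ : ℕ∞) u)
    (hcs : HasCompactSupport u) (hsupp : tsupport u ⊆ Ω) :
    ∫ x in Ω, |lap V x| * ‖u x‖ ^ p ≤
      p ^ p * ∫ x in Ω, (gradNorm V x ^ p / |lap V x| ^ (p - 1)) * gradNorm u x ^ p := by
  have hp0 : 0 < p := by linarith
  have hu1 : ContDiff ℝ 1 u := hu.of_le (by exact_mod_cast le_top)
  have hud : Differentiable ℝ u := hu1.differentiable one_ne_zero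
  have hw : ContDiff ℝ 1 (fun x => ‖u x‖ ^ p) := hu1.norm_rpow hp
  have hwsub : tsupport (fun x => ‖u x‖ ^ p) ⊆ tsupport u := by
    refine closure_mono fun x hx => ?_
    contrapose! hx
    have : u x = 0 := by simpa using hx
    simp [this, hp0.ne']
  have hwc : HasCompactSupport (fun x => ‖u x‖ ^ p) :=
    hcs.of_isClosed_subset (isClosed_tsupport _) hwsub
  obtain ⟨hDi, hD0⟩ := integral_divergence_eq_zero hΩ hV hw hwc (hwsub.trans hsupp)
  have hcl : ContinuousOn (fun x => |lap V x|) Ω := (continuousOn_lap hΩ hV).abs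
  have hpos : ∀ x ∈ Ω, 0 < |lap V x| := fun x hx => abs_pos.2 (hΔV x hx).ne
  have hA : IntegrableOn (fun x => |lap V x| * ‖u x‖ ^ p) Ω := by
    refine integrableOn_of_continuousOn_of_zero hΩ hcs hsupp
      (hcl.mul hw.continuous.continuousOn) fun x hx => ?_
    simp [image_eq_zero_of_notMem_tsupport hx, hp0.ne']
  have hB : IntegrableOn
      (fun x => (gradNorm V x ^ p / |lap V x| ^ (p - 1)) * gradNorm u x ^ p) Ω := by
    refine integrableOn_of_continuousOn_of_zero hΩ hcs hsupp ?_ fun x hx => ?_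
    · refine ContinuousOn.mul (ContinuousOn.div ?_ ?_ ?_) ?_
      · exact (continuousOn_gradNorm (hV.continuousOn_fderiv_of_isOpen hΩ (by norm_num))).rpow_const
          fun x _ => Or.inr hp0.le
      · exact hcl.rpow_const fun x hx => Or.inl (hpos x hx).ne'
      · exact fun x hx => (Real.rpow_pos_of_pos (hpos x hx) _).ne'
      · exact (continuousOn_gradNorm
          (hu1.continuous_fderiv one_ne_zero).continuousOn).rpow_const
          fun x _ => Or.inr hp0.le
    · have h0 : fderiv ℝ u x = 0 := by
        by_contra h
        exact hx (support_fderiv_subset ℝ h)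
      simp [gradNorm, h0, hp0.ne']
  have hpt : ∀ x ∈ Ω, |lap V x| * ‖u x‖ ^ p ≤
      p ^ p * ((gradNorm V x ^ p / |lap V x| ^ (p - 1)) * gradNorm u x ^ p) -
      p * (‖u x‖ ^ p * lap V x + ∑ i : Fin n,
        fderiv ℝ (fun x => ‖u x‖ ^ p) x (EuclideanSpace.single i 1) *
          fderiv ℝ V x (EuclideanSpace.single i 1)) := by
    intro x hx
    have hY := young_pointwise (g := gradNorm V x) (h := gradNorm u x) hp (hpos x hx)
      (norm_nonneg (u x)) (Real.sqrt_nonneg _) (Real.sqrt_nonneg _)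
    have hS : ∑ i : Fin n, fderiv ℝ (fun x => ‖u x‖ ^ p) x (EuclideanSpace.single i 1) *
        fderiv ℝ V x (EuclideanSpace.single i 1) ≤
        p * ‖u x‖ ^ (p - 1) * (gradNorm V x * gradNorm u x) := by
      calc _ ≤ ∑ i : Fin n, p * ‖u x‖ ^ (p - 1) *
            (‖fderiv ℝ V x (EuclideanSpace.single i 1)‖ *
              ‖fderiv ℝ u x (EuclideanSpace.single i 1)‖) := by
            refine Finset.sum_le_sum fun i _ => ?_
            refine (le_abs_self _).trans ?_
            rw [abs_mul, Real.norm_eq_abs]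
            have := mul_le_mul_of_nonneg_right
              (abs_fderiv_norm_rpow_apply_le hud hp x (EuclideanSpace.single i 1))
              (abs_nonneg (fderiv ℝ V x (EuclideanSpace.single i 1)))
            linarith
        _ ≤ _ := by
            rw [← Finset.mul_sum]
            gcongr
            exact Real.sum_mul_le_sqrt_mul_sqrt _ _ _
    have hlap : ‖u x‖ ^ p * lap V x = -(|lap V x| * ‖u x‖ ^ p) := by
      rw [abs_of_neg (hΔV x hx)]
      ring
    have hY' := mul_le_mul_of_nonneg_left (hS.trans hY) hp0.le
    rw [hlap]
    have e : p * ((1 - 1 / p) * (|lap V x| * ‖u x‖ ^ p) + 1 / p * (p ^ p *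
        (gradNorm V x ^ p / |lap V x| ^ (p - 1) * gradNorm u x ^ p))) =
        (p - 1) * (|lap V x| * ‖u x‖ ^ p) + p ^ p *
        (gradNorm V x ^ p / |lap V x| ^ (p - 1) * gradNorm u x ^ p) := by
      field_simp
    rw [e] at hY'
    linarith
  have hint := setIntegral_mono_on hA ((hB.const_mul (p ^ p)).sub (hDi.const_mul p))
    hΩ.measurableSet hpt
  refine hint.trans_eq ?_
  simp only [Pi.sub_apply]
  rw [integral_sub (hB.const_mul _) (hDi.const_mul _), integral_const_mul, integral_const_mul, hD0]
  ring
end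

section
/- Let x = (x', x'') ∈ ℝ^N × ℝ^{n-N} with 1 ≤ N ≤ n, let 1 < p < ∞ and α ∈ ℝ satisfy 2 < p(α+1) < N. Then for every smooth compactly supported complex-valued function u on ℝ^n whose support does not meet the set {x' = 0}, one has ((N - p(α+1))/p) · (∫_{ℝ^n} |u|^p / |x'|^{(α+1)p} dx)^{1/p} ≤ (∫_{ℝ^n} |∇u|^p / |x'|^{αp} dx)^{1/p}. -/
/-!
With `r = |x'|` and `γ = p (α + 1)`, the field `x' r^{-γ}` has divergence `(N - γ) r^{-γ}` off
`{x' = 0}`. Testing it against `|u|^p`, which is `C¹` because `p > 1` and is supported away from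
`{x' = 0}`, gives

  `(N - γ) ∫ |u|^p r^{-γ} = - ∫ r^{-γ} x' · ∇|u|^p ≤ p ∫ |u|^{p-1} |∇u| r^{1-γ}`.

Since `1 - γ = -(α + 1)(p - 1) - α`, Hölder's inequality bounds the last integral by
`(∫ |u|^p r^{-γ})^{1 - 1/p} (∫ |∇u|^p r^{-αp})^{1/p}`, and dividing by the first factor gives the
claim. The divergence identity is `integral_euler_add_eq_zero` (for a general `C¹` function of
compact support), and the pointwise bound on the derivative is `euler_weighted_ge`.
-/

open MeasureTheory Real

/-- The Euclidean norm of the first `N` coordinates `x'` of a point `x ∈ ℝ^n`. -/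
noncomputable def prNorm (N n : ℕ) (h : N ≤ n) (x : EuclideanSpace ℝ (Fin n)) : ℝ :=
  Real.sqrt (∑ i : Fin N, (x (Fin.castLE h i)) ^ 2)

/-- The point `(x', 0)`, the value at `x` of the Euler field of the first `N` coordinates. -/
noncomputable def headPart (N n : ℕ) (h : N ≤ n) (x : EuclideanSpace ℝ (Fin n)) :
    EuclideanSpace ℝ (Fin n) :=
  ∑ i : Fin N, x (Fin.castLE h i) • EuclideanSpace.single (Fin.castLE h i) (1 : ℝ)

lemma prNorm_nonneg {N n : ℕ} (h : N ≤ n) (x : EuclideanSpace ℝ (Fin n)) :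
    0 ≤ prNorm N n h x := Real.sqrt_nonneg _

lemma continuous_prNorm {N n : ℕ} (h : N ≤ n) : Continuous (prNorm N n h) := by
  unfold prNorm
  fun_prop

lemma contDiffAt_prNorm_rpow {N n : ℕ} (h : N ≤ n) {x : EuclideanSpace ℝ (Fin n)}
    (hx : prNorm N n h x ≠ 0) (s : ℝ) :
    ContDiffAt ℝ 1 (fun y => prNorm N n h y ^ s) x := by
  refine ContDiffAt.rpow_const_of_ne ?_ hx
  have h0 : (∑ i : Fin N, (x (Fin.castLE h i)) ^ 2) ≠ 0 := by
    intro h0; apply hx; simp [prNorm, h0]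
  refine ContDiffAt.sqrt ?_ h0
  fun_prop

/-- A function whose support stays away from `{x' = 0}` may be multiplied by any power of `|x'|`
without losing continuity. -/
lemma continuous_mul_prNorm_rpow {N n : ℕ} (h : N ≤ n) {f : EuclideanSpace ℝ (Fin n) → ℝ}
    (hf : Continuous f) (hs : ∀ x ∈ tsupport f, prNorm N n h x ≠ 0) (s : ℝ) :
    Continuous (fun x => f x * prNorm N n h x ^ s) := by
  refine continuous_of_tsupport fun x hx => ?_
  have hx' : x ∈ tsupport f := tsupport_mul_subset_left hx
  exact hf.continuousAt.mul ((continuous_prNorm h).continuousAt.rpow_const (Or.inl (hs x hx')))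

lemma contDiff_mul_prNorm_rpow {N n : ℕ} (h : N ≤ n) {f : EuclideanSpace ℝ (Fin n) → ℝ}
    (hf : ContDiff ℝ 1 f) (hs : ∀ x ∈ tsupport f, prNorm N n h x ≠ 0) (s : ℝ) :
    ContDiff ℝ 1 (fun x => f x * prNorm N n h x ^ s) := by
  rw [contDiff_iff_contDiffAt]
  intro x
  by_cases hx : x ∈ tsupport f
  · exact hf.contDiffAt.mul (contDiffAt_prNorm_rpow h (hs x hx) s)
  · have h0 : (fun x => f x * prNorm N n h x ^ s) =ᶠ[nhds x] fun _ => 0 := by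
      filter_upwards [notMem_tsupport_iff_eventuallyEq.mp hx] with y hy
      simp [hy]
    exact contDiffAt_const.congr_of_eventuallyEq h0

/-- Integration by parts against the Euler field: `div (F · (x', 0)) = N F + DF (x', 0)` integrates
to zero. -/
lemma integral_euler_add_eq_zero {N n : ℕ} (h : N ≤ n) {F : EuclideanSpace ℝ (Fin n) → ℝ}
    (hF : ContDiff ℝ 1 F) (hc : HasCompactSupport F) :
    ∫ x, (N * F x + fderiv ℝ F x (headPart N n h x)) = 0 := by
  have hFi : Integrable F := hF.continuous.integrable_of_hasCompactSupport hc
  have hdi : ∀ i : Fin n, Integrable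
      (fun x : EuclideanSpace ℝ (Fin n) => x i * fderiv ℝ F x (EuclideanSpace.single i 1)) := by
    intro i
    refine Continuous.integrable_of_hasCompactSupport ?_ ((hc.fderiv_apply ℝ _).mul_left)
    have := (hF.continuous_fderiv one_ne_zero).clm_apply
      (continuous_const (y := EuclideanSpace.single i (1 : ℝ)))
    fun_prop
  have hpart : ∀ i : Fin n,
      ∫ x : EuclideanSpace ℝ (Fin n), x i * fderiv ℝ F x (EuclideanSpace.single i 1)
        = - ∫ x, F x := by
    intro i
    have hd : ∀ x : EuclideanSpace ℝ (Fin n),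
        fderiv ℝ (fun y : EuclideanSpace ℝ (Fin n) => y i) x (EuclideanSpace.single i 1) = 1 := by
      intro x
      have : (fun y : EuclideanSpace ℝ (Fin n) => y i)
          = (EuclideanSpace.proj i : EuclideanSpace ℝ (Fin n) →L[ℝ] ℝ) := by ext; simp
      rw [this, ContinuousLinearMap.fderiv]
      simp
    have := integral_mul_fderiv_eq_neg_fderiv_mul_of_integrable (μ := volume)
      (f := fun y : EuclideanSpace ℝ (Fin n) => y i) (g := F) (v := EuclideanSpace.single i 1)
      (by simpa [hd] using hFi) (hdi i)
      (Continuous.integrable_of_hasCompactSupport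
        (by have := hF.continuous; fun_prop) hc.mul_left)
      (fun x _ => by fun_prop) (fun x _ => (hF.differentiable one_ne_zero) x)
    simpa [hd] using this
  have hexp : ∀ x, fderiv ℝ F x (headPart N n h x) = ∑ i : Fin N,
      x (Fin.castLE h i) * fderiv ℝ F x (EuclideanSpace.single (Fin.castLE h i) 1) := by
    intro x
    simp [headPart, map_sum]
  simp_rw [hexp]
  rw [integral_add (hFi.const_mul _) (integrable_finsetSum _ fun i _ => hdi _),
    integral_finsetSum _ fun i _ => hdi (Fin.castLE h i)]
  simp [hpart, integral_const_mul]

/-- Euler's identity for the homogeneous function `|x'|^s`. -/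
lemma fderiv_prNorm_rpow_headPart {N n : ℕ} (h : N ≤ n) {x : EuclideanSpace ℝ (Fin n)}
    (hx : prNorm N n h x ≠ 0) (s : ℝ) :
    fderiv ℝ (fun y => prNorm N n h y ^ s) x (headPart N n h x) = s * prNorm N n h x ^ s := by
  have hpos : 0 < prNorm N n h x := lt_of_le_of_ne (prNorm_nonneg h x) (Ne.symm hx)
  have hd : DifferentiableAt ℝ (fun y => prNorm N n h y ^ s) x :=
    (contDiffAt_prNorm_rpow h hx s).differentiableAt one_ne_zero
  -- Along the ray `x + t (x', 0)` the function equals `(1 + t)^s |x'|^s` for `t` near `0`.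
  have hline := (hd.hasFDerivAt.hasLineDerivAt (headPart N n h x))
  have hcoord : ∀ (t : ℝ) (i : Fin N),
      (x + t • headPart N n h x) (Fin.castLE h i) = (1 + t) * x (Fin.castLE h i) := by
    intro t i
    have : headPart N n h x (Fin.castLE h i) = x (Fin.castLE h i) := by
      simp [headPart, Pi.single_apply]
    simp [this]; ring
  have hpr : ∀ t : ℝ, prNorm N n h (x + t • headPart N n h x) = |1 + t| * prNorm N n h x := by
    intro t
    unfold prNorm
    simp_rw [hcoord, mul_pow, ← Finset.mul_sum]
    rw [Real.sqrt_mul (sq_nonneg _), Real.sqrt_sq_eq_abs]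
  have heq : (fun t : ℝ => prNorm N n h (x + t • headPart N n h x) ^ s) =ᶠ[nhds 0]
      fun t => (1 + t) ^ s * prNorm N n h x ^ s := by
    filter_upwards [lt_mem_nhds (show (-1 : ℝ) < 0 by norm_num)] with t ht
    have ht' : 0 ≤ 1 + t := by linarith
    rw [hpr, abs_of_nonneg ht', Real.mul_rpow ht' hpos.le]
  have h1 : HasDerivAt (fun t : ℝ => (1 + t) ^ s * prNorm N n h x ^ s)
      (s * prNorm N n h x ^ s) 0 := by
    have := (((hasDerivAt_id (0 : ℝ)).const_add 1).rpow_const (p := s)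
      (Or.inl (by simp))).mul_const (prNorm N n h x ^ s)
    simpa using this
  exact HasDerivAt.unique hline (h1.congr_of_eventuallyEq heq)

/-- Cauchy–Schwarz: the derivative along `(x', 0)` is at most `|x'| |∇u|`. -/
lemma norm_fderiv_headPart_le {N n : ℕ} (h : N ≤ n) (u : EuclideanSpace ℝ (Fin n) → ℂ)
    (x : EuclideanSpace ℝ (Fin n)) :
    ‖fderiv ℝ u x (headPart N n h x)‖ ≤ prNorm N n h x * gradNorm u x := by
  have hsum : ∑ i : Fin N, ‖fderiv ℝ u x (EuclideanSpace.single (Fin.castLE h i) 1)‖ ^ 2 ≤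
      ∑ i : Fin n, ‖fderiv ℝ u x (EuclideanSpace.single i 1)‖ ^ 2 := by
    refine (Finset.sum_map Finset.univ (Fin.castLEEmb h)
      (fun i => ‖fderiv ℝ u x (EuclideanSpace.single i 1)‖ ^ 2)).symm.trans_le ?_
    exact Finset.sum_le_sum_of_subset_of_nonneg (Finset.subset_univ _) fun _ _ _ => by positivity
  calc ‖fderiv ℝ u x (headPart N n h x)‖
      ≤ ∑ i : Fin N, |x (Fin.castLE h i)| *
          ‖fderiv ℝ u x (EuclideanSpace.single (Fin.castLE h i) 1)‖ := by
        rw [headPart, map_sum]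
        refine (norm_sum_le _ _).trans (Finset.sum_le_sum fun i _ => ?_)
        rw [map_smul, norm_smul, Real.norm_eq_abs]
    _ ≤ √(∑ i : Fin N, |x (Fin.castLE h i)| ^ 2) *
          √(∑ i : Fin N, ‖fderiv ℝ u x (EuclideanSpace.single (Fin.castLE h i) 1)‖ ^ 2) :=
        Real.sum_mul_le_sqrt_mul_sqrt _ _ _
    _ ≤ prNorm N n h x * gradNorm u x := by
        simp_rw [sq_abs]
        exact mul_le_mul_of_nonneg_left (Real.sqrt_le_sqrt hsum) (Real.sqrt_nonneg _)

/-- The integrand of the divergence identity for `F = |u|^p |x'|^{-γ}` is at least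
`(N - γ) F - p |u|^{p-1} |∇u| |x'|^{1-γ}`. -/
lemma euler_weighted_ge {N n : ℕ} (h : N ≤ n) {p : ℝ} (hp : 1 < p) (γ : ℝ)
    {u : EuclideanSpace ℝ (Fin n) → ℂ} (hu : ContDiff ℝ 1 u)
    {x : EuclideanSpace ℝ (Fin n)} (hx : prNorm N n h x ≠ 0) :
    (N - γ) * (‖u x‖ ^ p * prNorm N n h x ^ (-γ))
        - p * (‖u x‖ ^ (p - 1) * gradNorm u x * prNorm N n h x ^ (1 - γ)) ≤
      N * (‖u x‖ ^ p * prNorm N n h x ^ (-γ)) +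
        fderiv ℝ (fun y => ‖u y‖ ^ p * prNorm N n h y ^ (-γ)) x (headPart N n h x) := by
  have hpos : 0 < prNorm N n h x := lt_of_le_of_ne (prNorm_nonneg h x) (Ne.symm hx)
  have hud : Differentiable ℝ u := hu.differentiable one_ne_zero
  have h1 : DifferentiableAt ℝ (fun y => ‖u y‖ ^ p) x := (hud.norm_rpow hp) x
  have h2 : DifferentiableAt ℝ (fun y => prNorm N n h y ^ (-γ)) x :=
    (contDiffAt_prNorm_rpow h hx _).differentiableAt one_ne_zero
  have hder : |fderiv ℝ (fun y => ‖u y‖ ^ p) x (headPart N n h x)| ≤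
      p * ‖u x‖ ^ (p - 1) * (prNorm N n h x * gradNorm u x) := by
    rw [hud.fderiv_norm_rpow hp]
    have hin : |inner ℝ (u x) (fderiv ℝ u x (headPart N n h x))| ≤
        ‖u x‖ * (prNorm N n h x * gradNorm u x) :=
      (abs_real_inner_le_norm _ _).trans
        (mul_le_mul_of_nonneg_left (norm_fderiv_headPart_le h u x) (norm_nonneg _))
    by_cases hu0 : u x = 0
    · simp [hu0, Real.zero_rpow (sub_pos.mpr hp).ne']
    · have hn : 0 < ‖u x‖ := norm_pos_iff.mpr hu0
      have hsplit : ‖u x‖ ^ (p - 1) = ‖u x‖ ^ (p - 2) * ‖u x‖ := by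
        rw [← Real.rpow_add_one hn.ne']; ring_nf
      have hc : 0 ≤ p * ‖u x‖ ^ (p - 2) := by positivity
      calc _ = p * ‖u x‖ ^ (p - 2) * |inner ℝ (u x) (fderiv ℝ u x (headPart N n h x))| := by
            rw [← abs_of_nonneg hc, ← abs_mul, abs_of_nonneg hc]; rfl
        _ ≤ p * ‖u x‖ ^ (p - 2) * (‖u x‖ * (prNorm N n h x * gradNorm u x)) :=
            mul_le_mul_of_nonneg_left hin hc
        _ = _ := by rw [hsplit]; ring
  have hprod : fderiv ℝ (fun y => ‖u y‖ ^ p * prNorm N n h y ^ (-γ)) x (headPart N n h x) =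
      ‖u x‖ ^ p * (-γ * prNorm N n h x ^ (-γ)) +
        prNorm N n h x ^ (-γ) * fderiv ℝ (fun y => ‖u y‖ ^ p) x (headPart N n h x) := by
    rw [fderiv_fun_mul h1 h2, ← fderiv_prNorm_rpow_headPart h hx]
    simp
  have hpow : prNorm N n h x ^ (1 - γ) = prNorm N n h x ^ (-γ) * prNorm N n h x := by
    rw [← Real.rpow_add_one hpos.ne']; ring_nf
  rw [hprod, hpow]
  have hw : 0 ≤ prNorm N n h x ^ (-γ) := by positivity
  have := mul_le_mul_of_nonneg_left (neg_le_of_abs_le hder) hw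
  nlinarith [this]

theorem weighted_Lp_hardy_subspace (N n : ℕ) (hN : 1 ≤ N) (hNn : N ≤ n) (α p : ℝ)
    (hp : 1 < p) (h2 : 2 < p * (α + 1)) (hpN : p * (α + 1) < N)
    (u : EuclideanSpace ℝ (Fin n) → ℂ) (hu : ContDiff ℝ (⊤ : ℕ∞) u) (hcs : HasCompactSupport u)
    (hsupp : ∀ x ∈ tsupport u, prNorm N n hNn x ≠ 0) :
    ((N - p * (α + 1)) / p) * (∫ x, ‖u x‖ ^ p / prNorm N n hNn x ^ ((α + 1) * p)) ^ (1 / p) ≤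
      (∫ x, gradNorm u x ^ p / prNorm N n hNn x ^ (α * p)) ^ (1 / p) := by
  have hp0 : 0 < p := by linarith
  have hu1 : ContDiff ℝ 1 u := hu.of_le (by exact_mod_cast le_top)
  set r : EuclideanSpace ℝ (Fin n) → ℝ := prNorm N n hNn with hr
  have hr0 : ∀ x, 0 ≤ r x := prNorm_nonneg hNn
  set γ : ℝ := p * (α + 1) with hγ
  have hg0 : ∀ x, 0 ≤ gradNorm u x := fun x => Real.sqrt_nonneg _
  have hgc : Continuous (gradNorm u) := by
    have := fun i : Fin n => (hu1.continuous_fderiv one_ne_zero).clm_apply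
      (continuous_const (y := EuclideanSpace.single i (1 : ℝ)))
    unfold gradNorm
    fun_prop
  have hgs : ∀ x, x ∉ tsupport u → gradNorm u x = 0 := by
    intro x hx
    simp [gradNorm, fderiv_of_notMem_tsupport ℝ hx]
  have hus : ∀ x, x ∉ tsupport u → u x = 0 := fun x hx => image_eq_zero_of_notMem_tsupport hx
  -- A function vanishing off `tsupport u` has its support inside it.
  have hts : ∀ f : EuclideanSpace ℝ (Fin n) → ℝ, (∀ x, x ∉ tsupport u → f x = 0) →
      tsupport f ⊆ tsupport u := by
    intro f hf
    refine closure_minimal (fun x hx => ?_) (isClosed_tsupport u)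
    by_contra hx'
    exact hx (hf x hx')
  have hcomp : ∀ f : EuclideanSpace ℝ (Fin n) → ℝ, (∀ x, x ∉ tsupport u → f x = 0) →
      HasCompactSupport f := fun f hf =>
    hcs.of_isClosed_subset (isClosed_tsupport f) (hts f hf)
  -- The two Hölder factors.
  set f : EuclideanSpace ℝ (Fin n) → ℝ := fun x => ‖u x‖ ^ (p - 1) * r x ^ (-((α + 1) * (p - 1)))
    with hf
  set g : EuclideanSpace ℝ (Fin n) → ℝ := fun x => gradNorm u x * r x ^ (-α) with hg
  set F : EuclideanSpace ℝ (Fin n) → ℝ := fun x => ‖u x‖ ^ p * r x ^ (-γ) with hF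
  have hp1 : 0 < p - 1 := by linarith
  have hz1 : ∀ x, x ∉ tsupport u → ‖u x‖ ^ (p - 1) = 0 := fun x hx => by
    simp [hus x hx, Real.zero_rpow hp1.ne']
  have hzp : ∀ x, x ∉ tsupport u → ‖u x‖ ^ p = 0 := fun x hx => by
    simp [hus x hx, Real.zero_rpow hp0.ne']
  have hfc : Continuous f := continuous_mul_prNorm_rpow hNn
    (hu1.continuous.norm.rpow_const fun _ => Or.inr hp1.le)
    (fun x hx => hsupp x (hts _ hz1 hx)) _
  have hgc' : Continuous g := continuous_mul_prNorm_rpow hNn hgc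
    (fun x hx => hsupp x (hts _ hgs hx)) _
  have hFc : ContDiff ℝ 1 F := contDiff_mul_prNorm_rpow hNn (hu1.norm_rpow hp)
    (fun x hx => hsupp x (hts _ hzp hx)) _
  have hfs : HasCompactSupport f := hcomp _ fun x hx => by simp [hf, hz1 x hx]
  have hgs' : HasCompactSupport g := hcomp _ fun x hx => by simp [hg, hgs x hx]
  have hFz : ∀ x, x ∉ tsupport u → F x = 0 := fun x hx => by simp [hF, hzp x hx]
  have hFs : HasCompactSupport F := hcomp _ hFz
  have hpq : p.HolderConjugate (p / (p - 1)) := Real.HolderConjugate.conjExponent hp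
  have holder : ∫ x, f x * g x ≤
      (∫ x, f x ^ (p / (p - 1))) ^ (1 / (p / (p - 1))) * (∫ x, g x ^ p) ^ (1 / p) :=
    integral_mul_le_Lp_mul_Lq_of_nonneg hpq.symm
      (Filter.Eventually.of_forall fun x => by have := hr0 x; simp only [hf]; positivity)
      (Filter.Eventually.of_forall fun x =>
        mul_nonneg (hg0 x) (Real.rpow_nonneg (hr0 x) _))
      (hfc.memLp_of_hasCompactSupport hfs) (hgc'.memLp_of_hasCompactSupport hgs')
  have hfq : ∀ x, f x ^ (p / (p - 1)) = F x := by
    intro x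
    simp only [hf, hF, hγ]
    rw [Real.mul_rpow (by positivity) (Real.rpow_nonneg (hr0 x) _), ← Real.rpow_mul (norm_nonneg _),
      ← Real.rpow_mul (hr0 x)]
    congr 2 <;> field_simp
  have hgp : ∀ x, g x ^ p = gradNorm u x ^ p / r x ^ (α * p) := by
    intro x
    simp only [hg]
    rw [Real.mul_rpow (hg0 x) (Real.rpow_nonneg (hr0 x) _), ← Real.rpow_mul (hr0 x), neg_mul,
      Real.rpow_neg (hr0 x), div_eq_mul_inv]
  have hFe : ∀ x, ‖u x‖ ^ p / r x ^ ((α + 1) * p) = F x := by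
    intro x
    simp only [hF, hγ]
    rw [Real.rpow_neg (hr0 x), div_eq_mul_inv, mul_comm p]
  have hq : 1 / (p / (p - 1)) = 1 - 1 / p := by field_simp
  have hkey : (N - γ) * (∫ x, F x) ≤ p * ∫ x, f x * g x := by
    have hFi : Integrable F := hFc.continuous.integrable_of_hasCompactSupport hFs
    have hfgi : Integrable (fun x => f x * g x) :=
      (hfc.mul hgc').integrable_of_hasCompactSupport hfs.mul_right
    have hint : Integrable (fun x => N * F x + fderiv ℝ F x (headPart N n hNn x)) := by
      refine (hFi.const_mul _).add (Continuous.integrable_of_hasCompactSupport ?_ ?_)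
      · refine (hFc.continuous_fderiv one_ne_zero).clm_apply ?_
        unfold headPart
        fun_prop
      · refine (hFs.fderiv ℝ).mono fun x hx => ?_
        simp only [Function.mem_support] at hx ⊢
        intro h0
        simp [h0] at hx
    have hle : ∫ x, ((N - γ) * F x - p * (f x * g x)) ≤
        ∫ x, (N * F x + fderiv ℝ F x (headPart N n hNn x)) := by
      refine integral_mono ((hFi.const_mul _).sub (hfgi.const_mul _)) hint fun x => ?_
      by_cases hx : x ∈ tsupport u
      · have hrx := hsupp x hx
        have hrp : 0 < r x := lt_of_le_of_ne (hr0 x) (Ne.symm hrx)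
        have hfg : f x * g x = ‖u x‖ ^ (p - 1) * gradNorm u x * r x ^ (1 - γ) := by
          have : r x ^ (1 - γ) = r x ^ (-((α + 1) * (p - 1))) * r x ^ (-α) := by
            rw [← Real.rpow_add hrp]; congr 1; simp only [hγ]; ring
          simp only [hf, hg, this]; ring
        simp only [hfg]
        exact euler_weighted_ge hNn hp γ hu1 hrx
      · have h3 : x ∉ tsupport F := fun h => hx (hts F hFz h)
        simp [hFz x hx, hf, hz1 x hx, fderiv_of_notMem_tsupport ℝ h3]
    rw [integral_euler_add_eq_zero hNn hFc hFs,
      integral_sub (hFi.const_mul _) (hfgi.const_mul _), integral_const_mul,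
      integral_const_mul] at hle
    linarith
  simp_rw [hfq, hgp, hq] at holder
  simp_rw [hFe]
  set A := ∫ x, F x
  set B := (∫ x, gradNorm u x ^ p / r x ^ (α * p)) ^ (1 / p) with hB
  have hA0 : 0 ≤ A := integral_nonneg fun x => by have := hr0 x; simp only [hF]; positivity
  have hB0 : 0 ≤ B := Real.rpow_nonneg (integral_nonneg fun x =>
    div_nonneg (Real.rpow_nonneg (hg0 x) _) (Real.rpow_nonneg (hr0 x) _)) _
  rcases hA0.eq_or_lt with hA | hA
  · rw [← hA, Real.zero_rpow (by positivity), mul_zero]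
    exact hB0
  · have hApow : 0 < A ^ (1 - 1 / p) := Real.rpow_pos_of_pos hA _
    have hsplit : A = A ^ (1 - 1 / p) * A ^ (1 / p) := by
      rw [← Real.rpow_add hA]; simp
    have hfin : (N - γ) * A ≤ p * (A ^ (1 - 1 / p) * B) :=
      hkey.trans (mul_le_mul_of_nonneg_left holder hp0.le)
    rw [div_mul_eq_mul_div, div_le_iff₀ hp0]
    refine le_of_mul_le_mul_left ?_ hApow
    calc A ^ (1 - 1 / p) * ((N - γ) * A ^ (1 / p))
        = (N - γ) * (A ^ (1 - 1 / p) * A ^ (1 / p)) := by ring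
      _ = (N - γ) * A := by rw [← hsplit]
      _ ≤ p * (A ^ (1 - 1 / p) * B) := hfin
      _ = A ^ (1 - 1 / p) * (B * p) := by ring
end

section
/- Let n ≥ 3. Then for every smooth compactly supported complex-valued function u on ℝ^n whose support does not contain the origin, one has (∫_{ℝ^n} |x|² |u(x)|² dx) · (∫_{ℝ^n} |∇u(x)|² dx) ≥ ((n-2)/2)² · (∫_{ℝ^n} |u(x)|² dx)². -/
/-!
The inequality holds with the larger constant `(n/2)²`, by the classical Heisenberg argument.
Integrating `∂ᵢ(xᵢ |u|²)` gives `∫ xᵢ · 2 Re⟨u, ∂ᵢu⟩ = -∫ |u|²` (`integral_coord_mul_inner`).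
Expanding `0 ≤ ∫ |∂ᵢu + t xᵢ u|²` and summing over `i` therefore gives
`0 ≤ ∫ |∇u|² - t n ∫ |u|² + t² ∫ |x|² |u|²` for all real `t`, and the discriminant of this
quadratic in `t` must be nonpositive. Finally `n - 2 ≤ n`.
-/

open MeasureTheory Real

section

variable {n : ℕ} {u : EuclideanSpace ℝ (Fin n) → ℂ}

lemma continuous_partial (hu : ContDiff ℝ (⊤ : ℕ∞) u) (i : Fin n) :
    Continuous fun x => fderiv ℝ u x (EuclideanSpace.single i 1) :=
  (hu.continuous_fderiv (by simp)).clm_apply continuous_const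

/-- A continuous function that vanishes wherever the compactly supported `u` does is integrable. -/
lemma integrable_of_vanish (hcs : HasCompactSupport u) {f : EuclideanSpace ℝ (Fin n) → ℝ}
    (hf : Continuous f) (h : ∀ x, u x = 0 → f x = 0) : Integrable f :=
  hf.integrable_of_hasCompactSupport (hcs.mono fun x hx hux => hx (h x hux))

lemma integrable_norm_partial_sq (hu : ContDiff ℝ (⊤ : ℕ∞) u) (hcs : HasCompactSupport u)
    (i : Fin n) :
    Integrable fun x => ‖fderiv ℝ u x (EuclideanSpace.single i 1)‖ ^ 2 := by
  refine ((continuous_partial hu i).norm.pow 2).integrable_of_hasCompactSupport ?_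
  refine (hcs.fderiv (𝕜 := ℝ)).mono fun x hx h => hx ?_
  simp [h]

/-- Integration by parts of `∂ᵢ(|u|²)` against the coordinate `xᵢ`. -/
lemma integral_coord_mul_inner (hu : ContDiff ℝ (⊤ : ℕ∞) u) (hcs : HasCompactSupport u)
    (i : Fin n) :
    ∫ x, x i * (2 * inner ℝ (u x) (fderiv ℝ u x (EuclideanSpace.single i 1))) =
      -∫ x, ‖u x‖ ^ 2 := by
  have hd : Differentiable ℝ u := hu.differentiable (by simp)
  have hc := hu.continuous
  have hp := continuous_partial hu i
  have hg : ∀ x, fderiv ℝ (fun y => ‖u y‖ ^ 2) x (EuclideanSpace.single i 1) =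
      2 * inner ℝ (u x) (fderiv ℝ u x (EuclideanSpace.single i 1)) := by
    intro x
    rw [(hd x).hasFDerivAt.norm_sq.fderiv]
    simp [mul_add]
  have hf : ∀ x, fderiv ℝ (fun y : EuclideanSpace ℝ (Fin n) => y i) x
      (EuclideanSpace.single i 1) = 1 := by
    intro x
    have : HasFDerivAt (fun y : EuclideanSpace ℝ (Fin n) => y i)
        (EuclideanSpace.proj i : EuclideanSpace ℝ (Fin n) →L[ℝ] ℝ) x :=
      (EuclideanSpace.proj i : EuclideanSpace ℝ (Fin n) →L[ℝ] ℝ).hasFDerivAt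
    rw [this.fderiv]
    simp
  have key := integral_mul_fderiv_eq_neg_fderiv_mul_of_integrable (μ := volume)
    (f := fun y : EuclideanSpace ℝ (Fin n) => y i) (g := fun y => ‖u y‖ ^ 2)
    (v := EuclideanSpace.single i 1)
    (by
      simp only [hf, one_mul]
      exact integrable_of_vanish hcs (by fun_prop) (by simp +contextual))
    (by
      simp only [hg]
      exact integrable_of_vanish hcs (by fun_prop) (by simp +contextual))
    (integrable_of_vanish hcs (by fun_prop) (by simp +contextual))
    (fun x _ => by fun_prop)
    (fun x _ => (hd x).norm_sq ℝ)
  simpa only [hg, hf, one_mul] using key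

lemma quadratic_nonneg_coord (hu : ContDiff ℝ (⊤ : ℕ∞) u) (hcs : HasCompactSupport u)
    (i : Fin n) (t : ℝ) :
    0 ≤ (∫ x, ‖fderiv ℝ u x (EuclideanSpace.single i 1)‖ ^ 2) - t * (∫ x, ‖u x‖ ^ 2) +
      t ^ 2 * ∫ x, x i ^ 2 * ‖u x‖ ^ 2 := by
  have hc := hu.continuous
  have hp := continuous_partial hu i
  have hA := integrable_norm_partial_sq hu hcs i
  have hB : Integrable fun x : EuclideanSpace ℝ (Fin n) =>
      x i * (2 * inner ℝ (u x) (fderiv ℝ u x (EuclideanSpace.single i 1))) :=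
    integrable_of_vanish hcs (by fun_prop) (by simp +contextual)
  have hC : Integrable fun x : EuclideanSpace ℝ (Fin n) => x i ^ 2 * ‖u x‖ ^ 2 :=
    integrable_of_vanish hcs (by fun_prop) (by simp +contextual)
  have h : 0 ≤ ∫ x : EuclideanSpace ℝ (Fin n),
      (‖fderiv ℝ u x (EuclideanSpace.single i 1)‖ ^ 2 +
        t * (x i * (2 * inner ℝ (u x) (fderiv ℝ u x (EuclideanSpace.single i 1)))) +
        t ^ 2 * (x i ^ 2 * ‖u x‖ ^ 2)) := by
    refine integral_nonneg fun x => ?_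
    have := norm_add_sq_real (fderiv ℝ u x (EuclideanSpace.single i 1)) ((t * x i) • u x)
    rw [inner_smul_right, real_inner_comm, norm_smul, mul_pow, norm_eq_abs, sq_abs] at this
    have h0 := sq_nonneg ‖fderiv ℝ u x (EuclideanSpace.single i 1) + (t * x i) • u x‖
    simp only [Pi.zero_apply]
    linarith
  have hAB : Integrable fun x : EuclideanSpace ℝ (Fin n) =>
      ‖fderiv ℝ u x (EuclideanSpace.single i 1)‖ ^ 2 +
        t * (x i * (2 * inner ℝ (u x) (fderiv ℝ u x (EuclideanSpace.single i 1)))) :=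
    hA.add (hB.const_mul t)
  rw [integral_add hAB (hC.const_mul _), integral_add hA (hB.const_mul t),
    integral_const_mul, integral_const_mul, integral_coord_mul_inner hu hcs i] at h
  linarith

end

theorem heisenberg_pauli_weyl (n : ℕ) (hn : 3 ≤ n)
    (u : EuclideanSpace ℝ (Fin n) → ℂ) (hu : ContDiff ℝ (⊤ : ℕ∞) u) (hcs : HasCompactSupport u)
    (hsupp : (0 : EuclideanSpace ℝ (Fin n)) ∉ tsupport u) :
    (∫ x, ‖x‖ ^ 2 * ‖u x‖ ^ 2) * (∫ x, gradNorm u x ^ 2) ≥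
      (((n : ℝ) - 2) / 2) ^ 2 * (∫ x, ‖u x‖ ^ 2) ^ 2 := by
  have hc := hu.continuous
  have hG : ∫ x, gradNorm u x ^ 2 =
      ∑ i, ∫ x, ‖fderiv ℝ u x (EuclideanSpace.single i 1)‖ ^ 2 := by
    rw [← integral_finsetSum _ fun i _ => integrable_norm_partial_sq hu hcs i]
    congr 1 with x
    exact Real.sq_sqrt (by positivity)
  have hX : ∫ x, ‖x‖ ^ 2 * ‖u x‖ ^ 2 =
      ∑ i, ∫ x : EuclideanSpace ℝ (Fin n), x i ^ 2 * ‖u x‖ ^ 2 := by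
    rw [← integral_finsetSum _ fun i _ =>
      integrable_of_vanish hcs (by fun_prop) (by simp +contextual)]
    congr 1 with x
    rw [EuclideanSpace.real_norm_sq_eq, Finset.sum_mul]
  have hquad : ∀ t : ℝ, 0 ≤ (∫ x, ‖x‖ ^ 2 * ‖u x‖ ^ 2) * (t * t) +
      (-(n * ∫ x, ‖u x‖ ^ 2)) * t + ∫ x, gradNorm u x ^ 2 := by
    intro t
    have h := Finset.sum_nonneg fun i (_ : i ∈ Finset.univ) => quadratic_nonneg_coord hu hcs i t
    rw [Finset.sum_add_distrib, Finset.sum_sub_distrib, ← Finset.mul_sum, ← Finset.mul_sum,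
      ← hG, ← hX,
      Finset.sum_const, Finset.card_univ, Fintype.card_fin, nsmul_eq_mul] at h
    linarith
  have hdisc := discrim_le_zero hquad
  rw [discrim] at hdisc
  have hn' : (3 : ℝ) ≤ n := by exact_mod_cast hn
  have hconst : ((n : ℝ) - 2) ^ 2 * (∫ x, ‖u x‖ ^ 2) ^ 2 ≤ n ^ 2 * (∫ x, ‖u x‖ ^ 2) ^ 2 := by
    gcongr <;> linarith
  linarith
end
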